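/- Under the Tanner graph setup, if the girth g of G satisfies g ≥ 4 (which always holds for a simple bipartite graph), then the number of 4-cycles satisfies N_4 = (T_2 − |E|·A_4)/4, where A_4 = q1 + q2 + 1; equivalently trace((H Hᵀ)²) = 4·N_4 + |E|·(q1+q2+1). -/

import Mathlib

/-!
The trace of `(H Hᵀ)²` counts the closed walks `i, j, i', j', i` of length four in the Tanner graph
that start at a check node (`trace_sq_eq_sum`). By inclusion–exclusion such a walk either has
`i ≠ i'` and `j ≠ j'`, or it is degenerate. The walks with `i = i'` number `m (q2 + 1)²`, those
with `j = j'` number `n (q1 + 1)²`, and those with both number `|E|`; since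
`|E| = n (q1 + 1) = m (q2 + 1)`, the degenerate walks number `|E| (q1 + q2 + 1)`
(`trace_sq_eq_card_add`).

The nondegenerate walks are exactly the rooted, oriented four-cycles based at a check node. A
four-cycle of a simple graph is a quadruple of consecutively adjacent vertices with distinct opposite
vertices (`cycleCount_four`), and rotating by one step matches the cycles based at check nodes with
those based at variable nodes, so the cycle count is twice the number of nondegenerate walks
(`cycleCount_tannerGraph_four`).
-/

open Matrix Finset

/-- The Tanner graph of a real matrix `H`: the simple bipartite graph on `α ⊕ β`
in which check node `i` is adjacent to variable node `j` iff `H i j = 1`. -/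
def tannerGraph {α β : Type*} (H : Matrix α β ℝ) : SimpleGraph (α ⊕ β) :=
  SimpleGraph.fromRel (fun u v => ∃ i j, u = Sum.inl i ∧ v = Sum.inr j ∧ H i j = 1)

/-- The number of pairs `(v, w)` where `w` is a closed walk of length `l` based at `v`
that is a cycle. -/
noncomputable def cycleCount {V : Type*} (G : SimpleGraph V) (l : ℕ) : ℕ :=
  Nat.card {p : Σ v : V, G.Walk v v // p.2.length = l ∧ p.2.IsCycle}

/-- `N_{2k}`: the number of cycles of length `2k` in `G`, as a real number. -/
noncomputable def numCycles {V : Type*} (G : SimpleGraph V) (k : ℕ) : ℝ :=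
  (cycleCount G (2 * k) : ℝ) / (4 * k)

/-- Rooted, oriented four-cycles `a, b, c, d, a` of a graph, given by their vertices. -/
def FourCycle {V : Type*} (G : SimpleGraph V) : Type _ :=
  {x : V × V × V × V // G.Adj x.1 x.2.1 ∧ G.Adj x.2.1 x.2.2.1 ∧ G.Adj x.2.2.1 x.2.2.2 ∧
    G.Adj x.2.2.2 x.1 ∧ x.1 ≠ x.2.2.1 ∧ x.2.1 ≠ x.2.2.2}

/-- Quadruples `(i, j, i', j')` of two distinct rows and two distinct columns of `H` with ones in all
four common positions. -/
def Rect {α β : Type*} (H : Matrix α β ℝ) : Type _ :=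
  {x : α × β × α × β // H x.1 x.2.1 = 1 ∧ H x.2.2.1 x.2.1 = 1 ∧ H x.2.2.1 x.2.2.2 = 1 ∧
    H x.1 x.2.2.2 = 1 ∧ x.1 ≠ x.2.2.1 ∧ x.2.1 ≠ x.2.2.2}

theorem cycleCount_four {V : Type*} (G : SimpleGraph V) :
    cycleCount G 4 = Nat.card (FourCycle G) := by
  symm
  refine Nat.card_congr (Equiv.ofBijective (fun x => ⟨⟨x.1.1,
    .cons x.2.1 (.cons x.2.2.1 (.cons x.2.2.2.1 (.cons x.2.2.2.2.1 .nil)))⟩, rfl, ?_⟩) ⟨?_, ?_⟩)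
  · obtain ⟨⟨a, b, c, d⟩, h1, h2, h3, h4, h5, h6⟩ := x
    dsimp only at *
    have := h1.ne
    have := h2.ne
    have := h3.ne
    have := h4.ne
    rw [SimpleGraph.Walk.cons_isCycle_iff]
    simp [SimpleGraph.Walk.isPath_def]
    grind
  · rintro ⟨⟨a, b, c, d⟩, hx⟩ ⟨⟨a', b', c', d'⟩, hy⟩ h
    -- The walk determines its list of vertices.
    have h' := congrArg (fun p => p.1.2.support) h
    simp at h'
    apply Subtype.ext
    simp [h']
  · rintro ⟨⟨v, w⟩, hl, hc⟩
    dsimp only at hl hc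
    match w, hl, hc with
    | .cons (v := b) h1 (.cons (v := c) h2 (.cons (v := d) h3 (.cons h4 .nil))), _, hc =>
      refine ⟨⟨⟨v, b, c, d⟩, h1, h2, h3, h4, ?_, ?_⟩, rfl⟩
      all_goals
        rw [SimpleGraph.Walk.cons_isCycle_iff] at hc
        simp [SimpleGraph.Walk.isPath_def] at hc
        grind

section Tanner

variable {α β : Type*} (H : Matrix α β ℝ)

theorem tannerGraph_adj_inl_inr (i : α) (j : β) :
    (tannerGraph H).Adj (.inl i) (.inr j) ↔ H i j = 1 := by
  simp [tannerGraph]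

theorem tannerGraph_adj_inr_inl (i : α) (j : β) :
    (tannerGraph H).Adj (.inr j) (.inl i) ↔ H i j = 1 := by
  simp [tannerGraph]

theorem tannerGraph_adj_inl_inl (i i' : α) : ¬ (tannerGraph H).Adj (.inl i) (.inl i') := by
  simp [tannerGraph]

theorem tannerGraph_adj_inr_inr (j j' : β) : ¬ (tannerGraph H).Adj (.inr j) (.inr j') := by
  simp [tannerGraph]

/-- The two summands are the cycles based at a check node and those based at a variable node. -/
theorem card_fourCycle_tannerGraph [Finite α] [Finite β] :
    Nat.card (FourCycle (tannerGraph H)) = 2 * Nat.card (Rect H) := by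
  have : Finite (Rect H) := by unfold Rect; infer_instance
  rw [two_mul, ← Nat.card_sum]
  symm
  let f : Rect H ⊕ Rect H → FourCycle (tannerGraph H) := Sum.elim
    (fun x => ⟨(.inl x.1.1, .inr x.1.2.1, .inl x.1.2.2.1, .inr x.1.2.2.2), by
      have := x.2
      simpa [tannerGraph_adj_inl_inr, tannerGraph_adj_inr_inl] using this⟩)
    (fun x => ⟨(.inr x.1.2.1, .inl x.1.2.2.1, .inr x.1.2.2.2, .inl x.1.1), by
      have := x.2
      simp only [tannerGraph_adj_inl_inr, tannerGraph_adj_inr_inl]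
      grind⟩)
  refine Nat.card_congr (Equiv.ofBijective f ⟨?_, ?_⟩)
  · rintro (⟨⟨a, b, c, d⟩, hx⟩ | ⟨⟨a, b, c, d⟩, hx⟩)
      (⟨⟨a', b', c', d'⟩, hy⟩ | ⟨⟨a', b', c', d'⟩, hy⟩) h
    -- A cycle based at a check node never equals one based at a variable node.
    all_goals
      have h' := congrArg Subtype.val h
      cases h'
      try rfl
  · rintro ⟨⟨a | a, b | b, c | c, d | d⟩, hx⟩
    all_goals
      have hx' := hx
      simp only [tannerGraph_adj_inl_inr, tannerGraph_adj_inr_inl, tannerGraph_adj_inl_inl,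
        tannerGraph_adj_inr_inr, false_and, and_false] at hx'
    · exact ⟨.inl ⟨(a, b, c, d), by grind⟩, rfl⟩
    · exact ⟨.inr ⟨(d, a, b, c), by grind⟩, rfl⟩

theorem cycleCount_tannerGraph_four [Finite α] [Finite β] :
    cycleCount (tannerGraph H) 4 = 2 * Nat.card (Rect H) := by
  rw [cycleCount_four, card_fourCycle_tannerGraph]

theorem trace_sq_eq_sum [Fintype α] [DecidableEq α] [Fintype β] :
    Matrix.trace ((H * H.transpose) ^ 2) =
      ∑ i, ∑ j, ∑ i', ∑ j', H i j * H i' j * H i' j' * H i j' := by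
  simp only [Matrix.trace, Matrix.diag, sq, Matrix.mul_apply, Matrix.transpose_apply,
    Finset.sum_mul_sum]
  refine Finset.sum_congr rfl fun i _ => ?_
  rw [Finset.sum_comm]
  refine Finset.sum_congr rfl fun j _ => Finset.sum_congr rfl fun i' _ =>
    Finset.sum_congr rfl fun j' _ => by ring

theorem card_rect_eq_sum [Fintype α] [DecidableEq α] [Fintype β] [DecidableEq β]
    (hent : ∀ i j, H i j = 0 ∨ H i j = 1) :
    (Nat.card (Rect H) : ℝ) = ∑ i, ∑ j, ∑ i', ∑ j',
      if i ≠ i' ∧ j ≠ j' then H i j * H i' j * H i' j' * H i j' else 0 := by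
  classical
  simp only [Rect, Nat.card_eq_fintype_card, Fintype.card_subtype]
  rw [Finset.card_filter]
  push_cast
  simp only [Fintype.sum_prod_type]
  refine Finset.sum_congr rfl fun i _ => Finset.sum_congr rfl fun j _ =>
    Finset.sum_congr rfl fun i' _ => Finset.sum_congr rfl fun j' _ => ?_
  rcases hent i j with h1 | h1 <;> rcases hent i' j with h2 | h2 <;>
    rcases hent i' j' with h3 | h3 <;> rcases hent i j' with h4 | h4 <;> simp [h1, h2, h3, h4]

/-- A zero-one vector sums to the number of its ones. -/
theorem sum_eq_card_ones {ι : Type*} [Fintype ι] (f : ι → ℝ) (hf : ∀ i, f i = 0 ∨ f i = 1) :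
    ∑ i, f i = Nat.card {i // f i = 1} := by
  classical
  rw [Nat.card_eq_fintype_card, Fintype.card_subtype, Finset.card_filter]
  push_cast
  refine Finset.sum_congr rfl fun i _ => ?_
  rcases hf i with h | h <;> simp [h]

/-- Splitting the closed walks counted by the trace into nondegenerate ones and degenerate ones. -/
theorem trace_sq_eq_card_add [Fintype α] [DecidableEq α] [Fintype β] [DecidableEq β] (r c : ℝ)
    (hent : ∀ i j, H i j = 0 ∨ H i j = 1) (hcol : ∀ j, ∑ i, H i j = c)
    (hrow : ∀ i, ∑ j, H i j = r) :
    Matrix.trace ((H * H.transpose) ^ 2) =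
      Nat.card (Rect H) + Fintype.card β * c * (r + c - 1) := by
  have hsq : ∀ i j, H i j * H i j = H i j := fun i j => by
    rcases hent i j with h | h <;> simp [h]
  -- Both sides count the ones of `H`.
  have hE : Fintype.card β * c = Fintype.card α * r := by
    have := Finset.sum_comm (s := univ) (t := univ) (f := H)
    simpa [hcol, hrow] using this.symm
  have hA : ∑ i, ∑ j, ∑ i', ∑ j', (if i = i' then H i j * H i' j * H i' j' * H i j' else 0)
      = Fintype.card α * r * r := by
    have : ∀ i j, ∑ i', ∑ j', (if i = i' then H i j * H i' j * H i' j' * H i j' else 0)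
        = H i j * r := fun i j => by
      rw [Finset.sum_comm]
      simp only [Finset.sum_ite_eq, Finset.mem_univ, if_true]
      rw [← hrow i, Finset.mul_sum]
      exact Finset.sum_congr rfl fun j' _ => by rw [hsq, mul_assoc, hsq]
    simp only [this, ← Finset.sum_mul, hrow]
    simp [mul_assoc]
  have hB : ∑ i, ∑ j, ∑ i', ∑ j', (if j = j' then H i j * H i' j * H i' j' * H i j' else 0)
      = Fintype.card β * c * c := by
    have : ∀ i j, ∑ i', ∑ j', (if j = j' then H i j * H i' j * H i' j' * H i j' else 0)
        = H i j * c := fun i j => by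
      simp only [Finset.sum_ite_eq, Finset.mem_univ, if_true]
      rw [← hcol j, Finset.mul_sum]
      exact Finset.sum_congr rfl fun i' _ => by
        rw [mul_assoc (H i j), hsq, mul_right_comm, hsq]
    simp only [this]
    rw [Finset.sum_comm]
    simp only [← Finset.sum_mul, hcol]
    simp [mul_assoc]
  have hC : ∑ i, ∑ j, ∑ i', ∑ j',
      (if i = i' ∧ j = j' then H i j * H i' j * H i' j' * H i j' else 0)
      = Fintype.card α * r := by
    simp [ite_and, hsq, hrow]
  have hsplit : Matrix.trace ((H * H.transpose) ^ 2) = Nat.card (Rect H)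
      + Fintype.card α * r * r + Fintype.card β * c * c - Fintype.card α * r := by
    rw [trace_sq_eq_sum, card_rect_eq_sum H hent, ← hA, ← hB]
    conv_rhs => rw [← hC]
    simp only [← Finset.sum_add_distrib, ← Finset.sum_sub_distrib]
    refine Finset.sum_congr rfl fun i _ => Finset.sum_congr rfl fun j _ =>
      Finset.sum_congr rfl fun i' _ => Finset.sum_congr rfl fun j' _ => ?_
    by_cases h1 : i = i' <;> by_cases h2 : j = j' <;> simp [h1, h2]
  rw [hsplit, ← hE]
  ring

end Tanner

/-- Corollary 4(1), first formula: the number of 4-cycles `N_4` in terms of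
`T_2 = trace((H Hᵀ)²)`, where `A_4 = q1 + q2 + 1`. -/
theorem four_cycles
    (q1 q2 m n : ℕ) (hq1 : 1 ≤ q1) (hq12 : q1 ≤ q2) (hq2 : 2 ≤ q2)
    (hm : 0 < m) (hn : 0 < n)
    (H : Matrix (Fin m) (Fin n) ℝ)
    (hent : ∀ i j, H i j = 0 ∨ H i j = 1)
    (hcol : ∀ j, Nat.card {i : Fin m // H i j = 1} = q1 + 1)
    (hrow : ∀ i, Nat.card {j : Fin n // H i j = 1} = q2 + 1)
    (hconn : (tannerGraph H).Connected)
    (hg : (4 : ℕ∞) ≤ (tannerGraph H).egirth) :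
    numCycles (tannerGraph H) 2 =
      (Matrix.trace ((H * H.transpose) ^ 2)
        - ((n * (q1 + 1) : ℕ) : ℝ) * ((q1 : ℝ) + q2 + 1)) / 4
    ∧ Matrix.trace ((H * H.transpose) ^ 2) =
        4 * numCycles (tannerGraph H) 2 + ((n * (q1 + 1) : ℕ) : ℝ) * ((q1 : ℝ) + q2 + 1) := by
  have h := trace_sq_eq_card_add H (q2 + 1) (q1 + 1) hent
    (fun j => by rw [sum_eq_card_ones _ fun i => hent i j, hcol]; push_cast; rfl)
    (fun i => by rw [sum_eq_card_ones _ (hent i), hrow]; push_cast; rfl)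
  have hN : 4 * numCycles (tannerGraph H) 2 = Nat.card (Rect H) := by
    rw [numCycles, show 2 * 2 = 4 from rfl, cycleCount_tannerGraph_four]
    push_cast
    ring
  rw [Fintype.card_fin] at h
  push_cast
  constructor <;> linarith
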